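/- arXiv:math-ph/0403006 — 3 statements merged into one kernel-verified Lean document; each statement's English description precedes it below -/
import Mathlib

section
/- Fix μ > 0. For all real E, E' in (−∞, 0) \ {−μ²}, the operators R(E)ψ = R₀(E)ψ + (π log(−E/μ²))^{-1} ⟨Ω_E, ψ⟩ Ω_E satisfy the first resolvent identity R(E) − R(E') = (E − E') · R(E) ∘ R(E') as bounded operators on L²(ℝ²). -/
open MeasureTheory

/-!
The rank-one term turns the resolvent identity for `R(E)` into three identities: the resolvent
identity for `R₀`, the relations `Ω_E - Ω_E' = (E - E') R₀(E) Ω_E'` and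
`⟨Ω_E, ·⟩ - ⟨Ω_E', ·⟩ = (E - E') ⟨Ω_E, R₀(E') ·⟩`, and the scalar equation
`c(E') - c(E) = (E - E') ⟨Ω_E, Ω_E'⟩` for the reciprocal `c` of the coupling coefficient. The first
two hold because `(h - E)⁻¹ - (h - E')⁻¹ = (E - E') (h - E)⁻¹ (h - E')⁻¹` for every symbol `h`.
Only the scalar equation depends on the symbol `‖p‖ ^ 2` and on dimension two: in polar coordinates
`⟨Ω_E, Ω_E'⟩` is the integral of an exact derivative and equals
`π (log (-E') - log (-E)) / (E - E')`.
-/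

open Filter Module Set Topology
open scoped ComplexConjugate

section RankOnePerturbation

variable {𝕜 : Type*}

theorem resolvent_identity_add_smul_smulRight [Field 𝕜] [TopologicalSpace 𝕜]
    [IsTopologicalRing 𝕜] {M : Type*} [AddCommGroup M] [Module 𝕜 M] [TopologicalSpace M]
    [IsTopologicalAddGroup M] [ContinuousSMul 𝕜 M] {R R' : M →L[𝕜] M} {ℓ ℓ' : M →L[𝕜] 𝕜}
    {u u' : M} {d c c' : 𝕜} (hc₀ : c ≠ 0) (hc₀' : c' ≠ 0) (hR : R - R' = d • R.comp R')
    (hu : u - u' = d • R u') (hℓ : ℓ - ℓ' = d • ℓ.comp R') (hc : c' - c = d * ℓ u') :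
    (R + c⁻¹ • ℓ.smulRight u) - (R' + c'⁻¹ • ℓ'.smulRight u') =
      d • (R + c⁻¹ • ℓ.smulRight u).comp (R' + c'⁻¹ • ℓ'.smulRight u') := by
  ext ψ
  have hRψ : R ψ - R' ψ = d • R (R' ψ) := DFunLike.congr_fun hR ψ
  have hℓψ : ℓ ψ - ℓ' ψ = d * ℓ (R' ψ) := DFunLike.congr_fun hℓ ψ
  have hinv : c⁻¹ - c'⁻¹ = d * (c⁻¹ * c'⁻¹ * ℓ u') := by
    rw [inv_sub_inv' hc₀ hc₀', hc]
    ring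
  have hcoeff : c⁻¹ * ℓ ψ - c'⁻¹ * ℓ' ψ =
      d * (c⁻¹ * ℓ (R' ψ)) + d * (c⁻¹ * c'⁻¹ * ℓ u') * ℓ' ψ := by
    linear_combination c⁻¹ * hℓψ + ℓ' ψ * hinv
  simp only [sub_apply, add_apply, smul_apply, ContinuousLinearMap.comp_apply,
    ContinuousLinearMap.smulRight_apply, map_add, map_smul]
  linear_combination (norm := module) hRψ + (c'⁻¹ * ℓ' ψ) • hu + hcoeff • u

theorem innerSL_sub_innerSL_eq_smul_comp [RCLike 𝕜] {H : Type*} [NormedAddCommGroup H]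
    [InnerProductSpace 𝕜 H] {S : H →L[𝕜] H} (hS : (S : H →ₗ[𝕜] H).IsSymmetric) {u v : H} {r : ℝ}
    (huv : u - v = (r : 𝕜) • S u) :
    innerSL 𝕜 u - innerSL 𝕜 v = (r : 𝕜) • (innerSL 𝕜 u).comp S := by
  ext ψ
  calc inner 𝕜 u ψ - inner 𝕜 v ψ = inner 𝕜 ((r : 𝕜) • S u) ψ := by rw [← inner_sub_left, huv]
    _ = r * inner 𝕜 (S u) ψ := by rw [inner_smul_left, RCLike.conj_ofReal]
    _ = r * inner 𝕜 u (S ψ) := congrArg _ (hS u ψ)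

end RankOnePerturbation

section MultiplicationOperator

variable {α 𝕜 : Type*} [MeasurableSpace α] {ν : Measure α}

/-- `T` is the operator of multiplication by `m` on `L^p(ν)`. It is encoded as a
predicate on bounded operators rather than as a construction from a bounded `m`. -/
def IsMulOperator [NormedField 𝕜] {p : ENNReal} [Fact (1 ≤ p)] (m : α → 𝕜)
    (T : Lp 𝕜 p ν →L[𝕜] Lp 𝕜 p ν) : Prop :=
  ∀ ψ, T ψ =ᵐ[ν] fun x => m x * ψ x

namespace IsMulOperator

theorem sub_eq_smul_apply [NormedField 𝕜] {p : ENNReal} [Fact (1 ≤ p)] {m : α → 𝕜}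
    {T : Lp 𝕜 p ν →L[𝕜] Lp 𝕜 p ν} (hT : IsMulOperator m T) {u v w : Lp 𝕜 p ν} {d : 𝕜}
    (h : ∀ᵐ x ∂ν, u x - v x = d * (m x * w x)) : u - v = d • T w := by
  apply Lp.ext
  filter_upwards [Lp.coeFn_sub u v, Lp.coeFn_smul d (T w), hT w, h] with x hsub hsmul hTw hx
  rw [hsub, hsmul, Pi.sub_apply, Pi.smul_apply, hTw, hx, smul_eq_mul]

theorem isSymmetric [RCLike 𝕜] {m : α → 𝕜} {T : Lp 𝕜 2 ν →L[𝕜] Lp 𝕜 2 ν}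
    (hT : IsMulOperator m T) (hm : ∀ᵐ x ∂ν, conj (m x) = m x) :
    (T : Lp 𝕜 2 ν →ₗ[𝕜] Lp 𝕜 2 ν).IsSymmetric := by
  intro φ ψ
  change inner 𝕜 (T φ) ψ = inner 𝕜 φ (T ψ)
  rw [L2.inner_def, L2.inner_def]
  apply integral_congr_ae
  filter_upwards [hT φ, hT ψ, hm] with x hφ hψ hx
  simp only [hφ, hψ, RCLike.inner_apply, map_mul, hx]
  ring

end IsMulOperator

theorem inv_ofReal_sub_sub_inv_ofReal_sub [RCLike 𝕜] {t E E' : ℝ} (hE : t ≠ E) (hE' : t ≠ E') :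
    ((t - E : ℝ) : 𝕜)⁻¹ - ((t - E' : ℝ) : 𝕜)⁻¹ =
      ((E - E' : ℝ) : 𝕜) * (((t - E : ℝ) : 𝕜)⁻¹ * ((t - E' : ℝ) : 𝕜)⁻¹) := by
  rw [inv_sub_inv' (by exact_mod_cast sub_ne_zero.2 hE) (by exact_mod_cast sub_ne_zero.2 hE')]
  push_cast
  ring

theorem mulOperator_resolvent_identity_add_rankOne [RCLike 𝕜] {h : α → ℝ} {E E' : ℝ}
    (hE : ∀ᵐ x ∂ν, h x ≠ E) (hE' : ∀ᵐ x ∂ν, h x ≠ E') {Ω Ω' : Lp 𝕜 2 ν}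
    (hΩ : Ω =ᵐ[ν] fun x => ((h x - E : ℝ) : 𝕜)⁻¹)
    (hΩ' : Ω' =ᵐ[ν] fun x => ((h x - E' : ℝ) : 𝕜)⁻¹)
    {R₀ R₀' : Lp 𝕜 2 ν →L[𝕜] Lp 𝕜 2 ν}
    (hR₀ : IsMulOperator (fun x => ((h x - E : ℝ) : 𝕜)⁻¹) R₀)
    (hR₀' : IsMulOperator (fun x => ((h x - E' : ℝ) : 𝕜)⁻¹) R₀')
    {c c' : 𝕜} (hc₀ : c ≠ 0) (hc₀' : c' ≠ 0)
    (hc : c' - c = ((E - E' : ℝ) : 𝕜) * inner 𝕜 Ω Ω') :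
    (R₀ + c⁻¹ • (innerSL 𝕜 Ω).smulRight Ω) - (R₀' + c'⁻¹ • (innerSL 𝕜 Ω').smulRight Ω') =
      ((E - E' : ℝ) : 𝕜) • (R₀ + c⁻¹ • (innerSL 𝕜 Ω).smulRight Ω).comp
        (R₀' + c'⁻¹ • (innerSL 𝕜 Ω').smulRight Ω') := by
  have hR : R₀ - R₀' = ((E - E' : ℝ) : 𝕜) • R₀.comp R₀' := by
    ext1 ψ
    change R₀ ψ - R₀' ψ = ((E - E' : ℝ) : 𝕜) • R₀ (R₀' ψ)
    refine hR₀.sub_eq_smul_apply ?_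
    filter_upwards [hE, hE', hR₀ ψ, hR₀' ψ] with x hx hx' hψ hψ'
    rw [hψ, hψ', ← sub_mul, inv_ofReal_sub_sub_inv_ofReal_sub hx hx']
    ring
  have hu : Ω - Ω' = ((E - E' : ℝ) : 𝕜) • R₀ Ω' := by
    refine hR₀.sub_eq_smul_apply ?_
    filter_upwards [hE, hE', hΩ, hΩ'] with x hx hx' hΩx hΩx'
    rw [hΩx, hΩx', inv_ofReal_sub_sub_inv_ofReal_sub hx hx']
  have hu' : Ω - Ω' = ((E - E' : ℝ) : 𝕜) • R₀' Ω := by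
    refine hR₀'.sub_eq_smul_apply ?_
    filter_upwards [hE, hE', hΩ, hΩ'] with x hx hx' hΩx hΩx'
    rw [hΩx, hΩx', inv_ofReal_sub_sub_inv_ofReal_sub hx hx', mul_comm (_ : 𝕜)⁻¹]
  have hsymm := hR₀'.isSymmetric <| ae_of_all _ fun x => by
    rw [map_inv₀, RCLike.conj_ofReal]
  exact resolvent_identity_add_smul_smulRight hc₀ hc₀' hR hu
    (innerSL_sub_innerSL_eq_smul_comp hsymm hu') hc

end MultiplicationOperator

section PlaneIntegral

variable {a b : ℝ}

theorem hasDerivAt_log_sq_add_sub_log_sq_add (ha : 0 < a) (hb : 0 < b) (y : ℝ) :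
    HasDerivAt (fun y : ℝ => (Real.log (y ^ 2 + b) - Real.log (y ^ 2 + a)) / 2)
      ((a - b) * (y * ((y ^ 2 + a)⁻¹ * (y ^ 2 + b)⁻¹))) y := by
  have ha' : y ^ 2 + a ≠ 0 := by positivity
  have hb' : y ^ 2 + b ≠ 0 := by positivity
  have hlog : ∀ c : ℝ, y ^ 2 + c ≠ 0 →
      HasDerivAt (fun y : ℝ => Real.log (y ^ 2 + c)) (2 * y / (y ^ 2 + c)) y := fun c hc => by
    simpa using ((hasDerivAt_pow 2 y).add_const c).log hc
  refine (((hlog b hb').sub (hlog a ha')).div_const 2).congr_deriv ?_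
  field_simp
  ring

theorem tendsto_log_sq_add_sub_log_sq_add (a b : ℝ) :
    Tendsto (fun y : ℝ => Real.log (y ^ 2 + b) - Real.log (y ^ 2 + a)) atTop (𝓝 0) := by
  have hlog : ∀ c : ℝ, Tendsto (fun y : ℝ => Real.log (y ^ 2 + c) - Real.log (y ^ 2)) atTop (𝓝 0) :=
    fun c => (Real.tendsto_log_comp_add_sub_log c).comp (tendsto_pow_atTop two_ne_zero)
  simpa using (hlog b).sub (hlog a)

theorem sub_mul_integral_Ioi_mul_inv_sq_add_mul_inv_sq_add (ha : 0 < a) (hb : 0 < b) :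
    (a - b) * ∫ y in Ioi (0 : ℝ), y * ((y ^ 2 + a)⁻¹ * (y ^ 2 + b)⁻¹) =
      (Real.log a - Real.log b) / 2 := by
  wlog hab : b ≤ a generalizing a b
  · have hswap := this hb ha (le_of_not_ge hab)
    simp only [mul_comm (_ ^ 2 + b)⁻¹] at hswap
    linear_combination -hswap
  rw [← integral_const_mul, integral_Ioi_of_hasDerivAt_of_nonneg'
    (fun y _ => hasDerivAt_log_sq_add_sub_log_sq_add ha hb y) ?_
    ((tendsto_log_sq_add_sub_log_sq_add a b).div_const 2)]
  · simp only [ne_eq, OfNat.ofNat_ne_zero, not_false_eq_true, zero_pow, zero_add]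
    ring
  · intro y (hy : 0 < y)
    have := sub_nonneg.2 hab
    positivity

theorem sub_mul_integral_inv_norm_sq_add_mul_inv_norm_sq_add {V : Type*} [NormedAddCommGroup V]
    [NormedSpace ℝ V] [FiniteDimensional ℝ V] [MeasurableSpace V] [BorelSpace V] (ν : Measure V)
    [ν.IsAddHaarMeasure] (hV : finrank ℝ V = 2) (ha : 0 < a) (hb : 0 < b) :
    (a - b) * ∫ p, (‖p‖ ^ 2 + a)⁻¹ * (‖p‖ ^ 2 + b)⁻¹ ∂ν =
      ν.real (Metric.ball 0 1) * (Real.log a - Real.log b) := by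
  have : Nontrivial V := nontrivial_of_finrank_pos (R := ℝ) (by lia)
  rw [integral_fun_norm_addHaar ν fun y : ℝ => (y ^ 2 + a)⁻¹ * (y ^ 2 + b)⁻¹]
  simp only [hV, nsmul_eq_mul, smul_eq_mul, Nat.add_one_sub_one, pow_one, Nat.cast_ofNat]
  linear_combination 2 * ν.real (Metric.ball 0 1) *
    sub_mul_integral_Ioi_mul_inv_sq_add_mul_inv_sq_add ha hb

end PlaneIntegral

section PointInteraction

variable {𝕜 V : Type*} [RCLike 𝕜] [NormedAddCommGroup V] [InnerProductSpace ℝ V]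
  [FiniteDimensional ℝ V] [MeasurableSpace V] [BorelSpace V]

theorem volume_real_unitBall_of_finrank_eq_two (hV : finrank ℝ V = 2) :
    volume.real (Metric.ball (0 : V) 1) = Real.pi := by
  have : Nontrivial V := nontrivial_of_finrank_pos (R := ℝ) (by lia)
  simp [Measure.real, InnerProductSpace.volume_ball_of_dim_even (k := 1) hV, Real.pi_pos.le]

theorem sub_mul_inner_inv_norm_sq_sub (hV : finrank ℝ V = 2) {E E' : ℝ} (hE : E < 0)
    (hE' : E' < 0) {Ω Ω' : Lp 𝕜 2 (volume : Measure V)}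
    (hΩ : Ω =ᵐ[volume] fun p => ((‖p‖ ^ 2 - E : ℝ) : 𝕜)⁻¹)
    (hΩ' : Ω' =ᵐ[volume] fun p => ((‖p‖ ^ 2 - E' : ℝ) : 𝕜)⁻¹) :
    ((E - E' : ℝ) : 𝕜) * inner 𝕜 Ω Ω' =
      ((Real.pi * (Real.log (-E') - Real.log (-E)) : ℝ) : 𝕜) := by
  have hinner : inner 𝕜 Ω Ω' =
      ((∫ p : V, (‖p‖ ^ 2 + -E)⁻¹ * (‖p‖ ^ 2 + -E')⁻¹ : ℝ) : 𝕜) := by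
    rw [L2.inner_def, ← integral_ofReal]
    apply integral_congr_ae
    filter_upwards [hΩ, hΩ'] with p hp hp'
    simp only [hp, hp', RCLike.inner_apply, map_inv₀, RCLike.conj_ofReal, ← sub_eq_add_neg,
      RCLike.ofReal_mul]
    ring
  have hint := sub_mul_integral_inv_norm_sq_add_mul_inv_norm_sq_add (volume : Measure V) hV
    (neg_pos.2 hE) (neg_pos.2 hE')
  rw [volume_real_unitBall_of_finrank_eq_two hV] at hint
  rw [hinner, ← RCLike.ofReal_mul]
  congr 1
  linear_combination -hint

theorem pi_mul_log_neg_div_sq_ne_zero {μ E : ℝ} (hμ : μ ≠ 0) (hE : E < 0) (hne : E ≠ -μ ^ 2) :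
    Real.pi * Real.log (-E / μ ^ 2) ≠ 0 := by
  have hpos : 0 < -E / μ ^ 2 := div_pos (neg_pos.2 hE) (by positivity)
  have hne_one : -E / μ ^ 2 ≠ 1 := by
    rw [Ne, div_eq_one_iff_eq (by positivity), neg_eq_iff_eq_neg]
    exact hne
  exact mul_ne_zero Real.pi_ne_zero (Real.log_ne_zero_of_pos_of_ne_one hpos hne_one)

theorem point_resolvent_identity_general (hV : finrank ℝ V = 2) {μ : ℝ} (hμ : μ ≠ 0) {E E' : ℝ}
    (hE : E < 0) (hE' : E' < 0) (hne : E ≠ -μ ^ 2) (hne' : E' ≠ -μ ^ 2)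
    {Ω Ω' : Lp 𝕜 2 (volume : Measure V)}
    (hΩ : Ω =ᵐ[volume] fun p => ((‖p‖ ^ 2 - E : ℝ) : 𝕜)⁻¹)
    (hΩ' : Ω' =ᵐ[volume] fun p => ((‖p‖ ^ 2 - E' : ℝ) : 𝕜)⁻¹)
    {R₀ R₀' : Lp 𝕜 2 (volume : Measure V) →L[𝕜] Lp 𝕜 2 (volume : Measure V)}
    (hR₀ : IsMulOperator (fun p => ((‖p‖ ^ 2 - E : ℝ) : 𝕜)⁻¹) R₀)
    (hR₀' : IsMulOperator (fun p => ((‖p‖ ^ 2 - E' : ℝ) : 𝕜)⁻¹) R₀') :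
    (R₀ + ((Real.pi * Real.log (-E / μ ^ 2) : ℝ) : 𝕜)⁻¹ • (innerSL 𝕜 Ω).smulRight Ω) -
        (R₀' + ((Real.pi * Real.log (-E' / μ ^ 2) : ℝ) : 𝕜)⁻¹ • (innerSL 𝕜 Ω').smulRight Ω') =
      ((E - E' : ℝ) : 𝕜) •
        ((R₀ + ((Real.pi * Real.log (-E / μ ^ 2) : ℝ) : 𝕜)⁻¹ • (innerSL 𝕜 Ω).smulRight Ω).comp
          (R₀' + ((Real.pi * Real.log (-E' / μ ^ 2) : ℝ) : 𝕜)⁻¹ •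
            (innerSL 𝕜 Ω').smulRight Ω')) := by
  have hne_symbol : ∀ {e : ℝ}, e < 0 → ∀ p : V, ‖p‖ ^ 2 ≠ e := fun he p =>
    (he.trans_le (sq_nonneg ‖p‖)).ne'
  have hlog : ∀ {e : ℝ}, e < 0 → Real.log (-e / μ ^ 2) = Real.log (-e) - Real.log (μ ^ 2) :=
    fun he => Real.log_div (neg_pos.2 he).ne' (pow_ne_zero 2 hμ)
  refine mulOperator_resolvent_identity_add_rankOne (ae_of_all _ (hne_symbol hE))
    (ae_of_all _ (hne_symbol hE')) hΩ hΩ' hR₀ hR₀'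
    (RCLike.ofReal_ne_zero.2 (pi_mul_log_neg_div_sq_ne_zero hμ hE hne))
    (RCLike.ofReal_ne_zero.2 (pi_mul_log_neg_div_sq_ne_zero hμ hE' hne')) ?_
  rw [sub_mul_inner_inv_norm_sq_sub hV hE hE' hΩ hΩ', ← RCLike.ofReal_sub, hlog hE, hlog hE']
  congr 1
  ring

end PointInteraction

/-- first resolvent identity
`R(E) − R(E') = (E − E') R(E) R(E')` for the point-interaction resolvents
`R(E)ψ = R₀(E)ψ + (π log(−E/μ²))⁻¹ ⟨Ω_E, ψ⟩ Ω_E`, for `E, E' ∈ (−∞,0) \ {−μ²}`. -/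
theorem point_resolvent_identity (μ : ℝ) (hμ : 0 < μ) (E E' : ℝ)
    (hE : E < 0) (hE' : E' < 0) (hne : E ≠ -μ ^ 2) (hne' : E' ≠ -μ ^ 2)
    (Ω Ω' : Lp ℂ 2 (volume : Measure (EuclideanSpace ℝ (Fin 2))))
    (hΩ : Ω =ᵐ[volume] fun p => ((‖p‖ ^ 2 - E : ℝ) : ℂ)⁻¹)
    (hΩ' : Ω' =ᵐ[volume] fun p => ((‖p‖ ^ 2 - E' : ℝ) : ℂ)⁻¹)
    (R₀ R₀' : Lp ℂ 2 (volume : Measure (EuclideanSpace ℝ (Fin 2))) →L[ℂ]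
      Lp ℂ 2 (volume : Measure (EuclideanSpace ℝ (Fin 2))))
    (hR₀ : ∀ ψ, R₀ ψ =ᵐ[volume] fun p => ((‖p‖ ^ 2 - E : ℝ) : ℂ)⁻¹ * ψ p)
    (hR₀' : ∀ ψ, R₀' ψ =ᵐ[volume] fun p => ((‖p‖ ^ 2 - E' : ℝ) : ℂ)⁻¹ * ψ p) :
    (R₀ + ((Real.pi * Real.log (-E / μ ^ 2) : ℝ) : ℂ)⁻¹ • (innerSL ℂ Ω).smulRight Ω) -
        (R₀' + ((Real.pi * Real.log (-E' / μ ^ 2) : ℝ) : ℂ)⁻¹ • (innerSL ℂ Ω').smulRight Ω') =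
      ((E - E' : ℝ) : ℂ) •
        ((R₀ + ((Real.pi * Real.log (-E / μ ^ 2) : ℝ) : ℂ)⁻¹ • (innerSL ℂ Ω).smulRight Ω).comp
          (R₀' + ((Real.pi * Real.log (-E' / μ ^ 2) : ℝ) : ℂ)⁻¹ • (innerSL ℂ Ω').smulRight Ω')) := by
  exact point_resolvent_identity_general finrank_euclideanSpace_fin hμ.ne' hE hE' hne hne'
    hΩ hΩ' hR₀ hR₀'
end

section
/- Let u : ℝ² → ℂ be a Schwartz function whose Fourier transform has compact support not containing the origin (i.e. the support of û is a compact subset of ℝ² \ {0}). Then there is a constant C such that for all Λ ≥ 1, |∫_{{q ∈ ℝ² : |q| ≤ Λ}} u(q) dq| ≤ C Λ^{-2}. -/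
open MeasureTheory FourierTransform

/-!
Since `û` vanishes at the origin, `u` has mean zero, so its integral over the disc is minus its
integral over the complement of the disc. There `1 ≤ (‖q‖ / Λ) ^ k`, so Markov's inequality bounds
the latter by `Λ⁻¹ ^ k` times the `k`-th absolute moment of `u`, which is finite for every `k`.
-/

section Markov

variable {α F : Type*} [MeasurableSpace α] {μ : Measure α} [NormedAddCommGroup F] [NormedSpace ℝ F]

lemma norm_setIntegral_le_inv_mul_integral {f : α → F} {w : α → ℝ} {s : Set α} {c : ℝ}
    (hs : MeasurableSet s) (hc : 0 < c) (hw : 0 ≤ᵐ[μ] w) (hcw : ∀ x ∈ s, c ≤ w x)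
    (hwf : Integrable (fun x ↦ w x * ‖f x‖) μ) :
    ‖∫ x in s, f x ∂μ‖ ≤ c⁻¹ * ∫ x, w x * ‖f x‖ ∂μ := by
  have norm_le_on : ∀ x ∈ s, ‖f x‖ ≤ c⁻¹ * (w x * ‖f x‖) := fun x hx ↦ by
    rw [le_inv_mul_iff₀ hc]
    gcongr
    exact hcw x hx
  calc
    ‖∫ x in s, f x ∂μ‖ ≤ ∫ x in s, c⁻¹ * (w x * ‖f x‖) ∂μ :=
      norm_integral_le_of_norm_le (hwf.const_mul c⁻¹).integrableOn
        (ae_restrict_of_forall_mem hs norm_le_on)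
    _ = c⁻¹ * ∫ x in s, w x * ‖f x‖ ∂μ := integral_const_mul _ _
    _ ≤ c⁻¹ * ∫ x, w x * ‖f x‖ ∂μ := by
      gcongr c⁻¹ * ?_
      exact setIntegral_le_integral hwf (hw.mono fun x hx ↦ mul_nonneg hx (norm_nonneg (f x)))

lemma norm_setIntegral_compl_of_integral_eq_zero {f : α → F} {s : Set α} (hs : MeasurableSet s)
    (hf : Integrable f μ) (hf₀ : ∫ x, f x ∂μ = 0) :
    ‖∫ x in sᶜ, f x ∂μ‖ = ‖∫ x in s, f x ∂μ‖ := by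
  rw [setIntegral_compl hs hf, hf₀, zero_sub, norm_neg]

end Markov

section Moments

variable {E F : Type*} [NormedAddCommGroup E] [MeasurableSpace E] [OpensMeasurableSpace E]
  {μ : Measure E} [NormedAddCommGroup F] [NormedSpace ℝ F]

lemma norm_setIntegral_norm_le_of_integral_eq_zero {f : E → F} {k : ℕ} {Λ : ℝ} (hΛ : 0 < Λ)
    (hf : Integrable f μ) (hf₀ : ∫ x, f x ∂μ = 0)
    (hfk : Integrable (fun x ↦ ‖x‖ ^ k * ‖f x‖) μ) :
    ‖∫ x in {x | ‖x‖ ≤ Λ}, f x ∂μ‖ ≤ (Λ ^ k)⁻¹ * ∫ x, ‖x‖ ^ k * ‖f x‖ ∂μ := by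
  have hs : MeasurableSet {x : E | ‖x‖ ≤ Λ} := measurableSet_le measurable_norm measurable_const
  have pow_le_on_compl : ∀ x ∈ {x : E | ‖x‖ ≤ Λ}ᶜ, Λ ^ k ≤ ‖x‖ ^ k := fun x hx ↦
    pow_le_pow_left₀ hΛ.le (le_of_not_ge hx) k
  rw [← norm_setIntegral_compl_of_integral_eq_zero hs hf hf₀]
  exact norm_setIntegral_le_inv_mul_integral hs.compl (pow_pos hΛ k)
    (.of_forall fun x ↦ pow_nonneg (norm_nonneg x) k) pow_le_on_compl hfk

end Moments

section Fourier

variable {E F : Type*} [NormedAddCommGroup E] [InnerProductSpace ℝ E] [FiniteDimensional ℝ E]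
  [MeasurableSpace E] [BorelSpace E] [NormedAddCommGroup F] [NormedSpace ℂ F]

lemma fourier_apply_zero (f : E → F) : 𝓕 f 0 = ∫ x, f x := by
  simp only [Real.fourier_eq, inner_zero_right, neg_zero, AddChar.map_zero_eq_one, one_smul]

theorem disc_integral_decay_general (u : SchwartzMap E F) (h0 : 𝓕 ⇑u 0 = 0) (k : ℕ) :
    ∃ C : ℝ, ∀ Λ : ℝ, 0 < Λ → ‖∫ q in {q : E | ‖q‖ ≤ Λ}, u q‖ ≤ C * Λ⁻¹ ^ k := by
  have integral_eq_zero : ∫ q, u q = 0 := (fourier_apply_zero u).symm.trans h0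
  refine ⟨∫ q, ‖q‖ ^ k * ‖u q‖, fun Λ hΛ ↦ ?_⟩
  rw [inv_pow, mul_comm]
  exact norm_setIntegral_norm_le_of_integral_eq_zero hΛ u.integrable integral_eq_zero
    (u.integrable_pow_mul volume k)

end Fourier

/-- if `u : ℝ² → ℂ` is a Schwartz function whose Fourier transform has compact
support not containing the origin, then there is a constant `C` such that for all `Λ ≥ 1`,
`|∫_{|q| ≤ Λ} u(q) dq| ≤ C Λ⁻²`. -/
theorem disc_integral_decay (u : SchwartzMap (EuclideanSpace ℝ (Fin 2)) ℂ)
    (hsupp : HasCompactSupport (𝓕 ⇑u))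
    (h0 : (0 : EuclideanSpace ℝ (Fin 2)) ∉ tsupport (𝓕 ⇑u)) :
    ∃ C : ℝ, ∀ Λ : ℝ, 1 ≤ Λ →
      ‖∫ q in {q : EuclideanSpace ℝ (Fin 2) | ‖q‖ ≤ Λ}, u q‖ ≤ C * Λ⁻¹ ^ 2 := by
  obtain ⟨C, hC⟩ := disc_integral_decay_general u (image_eq_zero_of_notMem_tsupport h0) 2
  exact ⟨C, fun Λ hΛ ↦ hC Λ (one_pos.trans_le hΛ)⟩
end

section
/- Let u : ℝ² → ℂ be a Schwartz function whose Fourier transform has compact support not containing the origin, and fix μ > 0. Then lim_{Λ→∞} g_Λ(μ) · Λ · |∫_{{q ∈ ℝ² : |q| ≤ Λ}} u(q) dq| = 0. Equivalently, the L²(ℝ²)-norm of the function p ↦ (2π)^{-2} g_Λ(μ) ρ_Λ(p) ∫_{{q : |q| ≤ Λ}} u(q) dq tends to 0 as Λ → ∞, so that H_Λ u → H₀ u in L²(ℝ²) for such u, where H₀ is multiplication by |p|². -/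
open MeasureTheory FourierTransform Filter

/-- The disc of radius `Λ` in `ℝ²`. -/
def disc (Λ : ℝ) : Set (EuclideanSpace ℝ (Fin 2)) := {p | ‖p‖ ≤ Λ}

/-- The renormalized coupling constant
`g_Λ(μ) = (2π)² (∫_{|p| ≤ Λ} (|p|² + μ²)⁻¹ dp)⁻¹`. -/
noncomputable def gCoupling (μ Λ : ℝ) : ℝ :=
  (2 * Real.pi) ^ 2 * (∫ p in disc Λ, (‖p‖ ^ 2 + μ ^ 2)⁻¹)⁻¹

/-!
A function whose Fourier transform vanishes at the origin has integral zero, so its integral over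
the disc of radius `Λ` is minus its integral over the exterior. There `Λ ≤ |q|`, hence `Λ` times
this integral is at most the part of the first moment `∫ |q| |u(q)| dq` lying outside the disc,
which tends to `0`. The coupling `g_Λ(μ)` is bounded because it decreases with `Λ`. Finally the
indicator of the disc has `L²`-norm `√π Λ`, which makes the second limit a constant multiple of the
first.
-/

section Tails

variable {E F : Type*} [SeminormedAddCommGroup E] [MeasurableSpace E] [OpensMeasurableSpace E]
  [NormedAddCommGroup F] [NormedSpace ℝ F] {ν : Measure E}

lemma tendsto_setIntegral_compl_closedBall_zero {f : E → F} (hf : Integrable f ν) :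
    Tendsto (fun R : ℝ => ∫ x in (Metric.closedBall 0 R)ᶜ, f x ∂ν) atTop (nhds 0) := by
  have hempty : ⋂ R : ℝ, (Metric.closedBall (0 : E) R)ᶜ = ∅ :=
    Set.eq_empty_of_forall_notMem fun x hx => Set.mem_iInter.mp hx ‖x‖ (by simp)
  have hanti : Antitone fun R : ℝ => (Metric.closedBall (0 : E) R)ᶜ := fun _ _ hRS =>
    Set.compl_subset_compl.mpr (Metric.closedBall_subset_closedBall hRS)
  simpa [hempty] using tendsto_setIntegral_of_antitone
    (fun _ => Metric.isClosed_closedBall.measurableSet.compl) hanti ⟨0, hf.integrableOn⟩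

lemma mul_norm_setIntegral_compl_closedBall_le {f : E → F}
    (hmoment : Integrable (fun x => ‖x‖ * ‖f x‖) ν) {R : ℝ} (hR : 0 ≤ R) :
    R * ‖∫ x in (Metric.closedBall 0 R)ᶜ, f x ∂ν‖ ≤
      ∫ x in (Metric.closedBall 0 R)ᶜ, ‖x‖ * ‖f x‖ ∂ν := by
  have hle : ∀ x ∈ (Metric.closedBall (0 : E) R)ᶜ, ‖R • f x‖ ≤ ‖x‖ * ‖f x‖ := fun x hx => by
    have hRx : R < ‖x‖ := by simpa using hx
    rw [norm_smul, Real.norm_of_nonneg hR]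
    gcongr
  calc R * ‖∫ x in (Metric.closedBall 0 R)ᶜ, f x ∂ν‖
      = ‖∫ x in (Metric.closedBall 0 R)ᶜ, R • f x ∂ν‖ := by
        rw [integral_smul, norm_smul, Real.norm_of_nonneg hR]
    _ ≤ ∫ x in (Metric.closedBall 0 R)ᶜ, ‖x‖ * ‖f x‖ ∂ν :=
        norm_integral_le_of_norm_le hmoment.integrableOn
          (ae_restrict_of_forall_mem Metric.isClosed_closedBall.measurableSet.compl hle)

lemma tendsto_mul_norm_setIntegral_closedBall_zero {f : E → F} (hf : Integrable f ν)
    (hmoment : Integrable (fun x => ‖x‖ * ‖f x‖) ν) (hzero : ∫ x, f x ∂ν = 0) :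
    Tendsto (fun R : ℝ => R * ‖∫ x in Metric.closedBall 0 R, f x ∂ν‖) atTop (nhds 0) := by
  have hexterior (R : ℝ) :
      ‖∫ x in Metric.closedBall 0 R, f x ∂ν‖ = ‖∫ x in (Metric.closedBall 0 R)ᶜ, f x ∂ν‖ := by
    have hsum := integral_add_compl (Metric.isClosed_closedBall (x := 0) (ε := R)).measurableSet hf
    rw [eq_neg_of_add_eq_zero_left (hsum.trans hzero), norm_neg]
  refine squeeze_zero' ?_ ?_ (tendsto_setIntegral_compl_closedBall_zero hmoment)
  · filter_upwards [eventually_ge_atTop 0] with R hR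
    positivity
  · filter_upwards [eventually_ge_atTop 0] with R hR
    rw [hexterior]
    exact mul_norm_setIntegral_compl_closedBall_le hmoment hR

end Tails

lemma fourier_apply_zero_s12 {V F : Type*} [NormedAddCommGroup V] [InnerProductSpace ℝ V]
    [FiniteDimensional ℝ V] [MeasurableSpace V] [BorelSpace V] [NormedAddCommGroup F]
    [NormedSpace ℂ F] (f : V → F) : 𝓕 f 0 = ∫ x, f x := by
  simp [Real.fourier_eq]

lemma setIntegral_pos_of_forall_pos {X : Type*} [MeasurableSpace X] {ν : Measure X} {s : Set X}
    {f : X → ℝ} (hpos : ∀ x, 0 < f x) (hf : IntegrableOn f s ν) (hs : ν s ≠ 0) :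
    0 < ∫ x in s, f x ∂ν := by
  have hsupport : Function.support f = Set.univ :=
    Set.eq_univ_of_forall fun x => (hpos x).ne'
  rw [setIntegral_pos_iff_support_of_nonneg_ae (ae_of_all _ fun x => (hpos x).le) hf, hsupport,
    Set.univ_inter]
  exact pos_iff_ne_zero.mpr hs

lemma continuous_inv_norm_sq_add_sq {E : Type*} [SeminormedAddCommGroup E] {μ : ℝ} (hμ : μ ≠ 0) :
    Continuous fun p : E => (‖p‖ ^ 2 + μ ^ 2)⁻¹ :=
  Continuous.inv₀ (by fun_prop) fun _ => by positivity

lemma disc_eq_closedBall (Λ : ℝ) : disc Λ = Metric.closedBall 0 Λ := by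
  ext p
  simp [disc]

lemma disc_mono : Monotone disc := fun _ _ hΛ _ hp => le_trans hp hΛ

lemma integrableOn_disc_inv_norm_sq_add_sq {μ : ℝ} (hμ : μ ≠ 0) (Λ : ℝ) :
    IntegrableOn (fun p : EuclideanSpace ℝ (Fin 2) => (‖p‖ ^ 2 + μ ^ 2)⁻¹) (disc Λ) := by
  rw [disc_eq_closedBall]
  exact (continuous_inv_norm_sq_add_sq hμ).continuousOn.integrableOn_compact
    (isCompact_closedBall 0 Λ)

lemma setIntegral_disc_inv_norm_sq_add_sq_pos {μ Λ : ℝ} (hμ : μ ≠ 0) (hΛ : 0 < Λ) :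
    0 < ∫ p in disc Λ, (‖p‖ ^ 2 + μ ^ 2)⁻¹ := by
  refine setIntegral_pos_of_forall_pos (fun p => by positivity)
    (integrableOn_disc_inv_norm_sq_add_sq hμ Λ) ?_
  rw [disc_eq_closedBall]
  exact (Metric.measure_closedBall_pos volume 0 hΛ).ne'

lemma gCoupling_nonneg (μ Λ : ℝ) : 0 ≤ gCoupling μ Λ :=
  mul_nonneg (by positivity) (inv_nonneg.mpr (integral_nonneg fun p => by positivity))

lemma antitoneOn_gCoupling {μ : ℝ} (hμ : μ ≠ 0) : AntitoneOn (gCoupling μ) (Set.Ioi 0) := by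
  intro Λ hΛ Λ' _ hle
  have hmono : ∫ p in disc Λ, (‖p‖ ^ 2 + μ ^ 2)⁻¹ ≤ ∫ p in disc Λ', (‖p‖ ^ 2 + μ ^ 2)⁻¹ :=
    setIntegral_mono_set (integrableOn_disc_inv_norm_sq_add_sq hμ Λ')
      (ae_of_all _ fun p => by positivity) (disc_mono hle).eventuallyLE
  exact mul_le_mul_of_nonneg_left
    (inv_anti₀ (setIntegral_disc_inv_norm_sq_add_sq_pos hμ hΛ) hmono) (by positivity)

lemma tendsto_gCoupling_mul_zero {μ : ℝ} (hμ : μ ≠ 0) {h : ℝ → ℝ}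
    (hlim : Tendsto h atTop (nhds 0)) :
    Tendsto (fun Λ => gCoupling μ Λ * h Λ) atTop (nhds 0) := by
  refine bdd_le_mul_tendsto_zero' (gCoupling μ 1) ?_ hlim
  filter_upwards [eventually_ge_atTop 1] with Λ hΛ
  rw [abs_of_nonneg (gCoupling_nonneg μ Λ)]
  exact antitoneOn_gCoupling hμ (Set.mem_Ioi.mpr one_pos) (one_pos.trans_le hΛ) hΛ

lemma eLpNorm_two_indicator_disc_const {F : Type*} [NormedAddCommGroup F] {Λ : ℝ} (hΛ : 0 ≤ Λ)
    (c : F) :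
    eLpNorm ((disc Λ).indicator fun _ => c) 2 volume =
      ENNReal.ofReal (√Real.pi * Λ * ‖c‖) := by
  have hsqrt : (Λ ^ 2 * Real.pi) ^ (1 / 2 : ℝ) = √Real.pi * Λ := by
    rw [← Real.sqrt_eq_rpow, Real.sqrt_mul (by positivity), Real.sqrt_sq hΛ, mul_comm]
  rw [disc_eq_closedBall, eLpNorm_indicator_const Metric.isClosed_closedBall.measurableSet
      two_ne_zero ENNReal.ofNat_ne_top, EuclideanSpace.volume_closedBall_fin_two,
    ← ENNReal.ofReal_pow hΛ, ← ENNReal.ofReal_mul (by positivity),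
    ENNReal.ofReal_rpow_of_nonneg (by positivity) (by positivity), ENNReal.toReal_ofNat, hsqrt,
    ← ofReal_norm, ← ENNReal.ofReal_mul (by positivity), mul_comm]

theorem coupling_times_disc_integral_tendsto_zero_general {F : Type*} [NormedAddCommGroup F]
    [NormedSpace ℝ F] [CompleteSpace F] {u : EuclideanSpace ℝ (Fin 2) → F} (hu : Integrable u)
    (hmoment : Integrable fun q => ‖q‖ * ‖u q‖) (hzero : ∫ q, u q = 0) {μ : ℝ} (hμ : μ ≠ 0) :
    Tendsto (fun Λ : ℝ => gCoupling μ Λ * Λ * ‖∫ q in disc Λ, u q‖) atTop (nhds 0) ∧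
    Tendsto (fun Λ : ℝ =>
        eLpNorm ((disc Λ).indicator
          fun _ => (gCoupling μ Λ / (2 * Real.pi) ^ 2) • ∫ q in disc Λ, u q) 2 volume)
      atTop (nhds 0) := by
  have hlim : Tendsto (fun Λ : ℝ => gCoupling μ Λ * Λ * ‖∫ q in disc Λ, u q‖) atTop (nhds 0) := by
    simpa only [mul_assoc, disc_eq_closedBall] using tendsto_gCoupling_mul_zero hμ
      (tendsto_mul_norm_setIntegral_closedBall_zero hu hmoment hzero)
  have hscaled : Tendsto (fun Λ : ℝ => ENNReal.ofReal
      (√Real.pi / (2 * Real.pi) ^ 2 * (gCoupling μ Λ * Λ * ‖∫ q in disc Λ, u q‖)))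
      atTop (nhds 0) := by
    simpa using ENNReal.tendsto_ofReal (hlim.const_mul (√Real.pi / (2 * Real.pi) ^ 2))
  refine ⟨hlim, hscaled.congr' ?_⟩
  filter_upwards [eventually_ge_atTop 0] with Λ hΛ
  have hcoeff : 0 ≤ gCoupling μ Λ / (2 * Real.pi) ^ 2 :=
    div_nonneg (gCoupling_nonneg μ Λ) (by positivity)
  rw [eLpNorm_two_indicator_disc_const hΛ, norm_smul, Real.norm_of_nonneg hcoeff]
  congr 1
  ring

/-- for a Schwartz function `u` on `ℝ²` whose Fourier transform has compact
support avoiding the origin, and `μ > 0`,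
`g_Λ(μ) · Λ · |∫_{|q| ≤ Λ} u(q) dq| → 0` as `Λ → ∞`; equivalently the `L²`-norm of
`p ↦ (2π)⁻² g_Λ(μ) ρ_Λ(p) ∫_{|q| ≤ Λ} u(q) dq` tends to `0`, so `H_Λ u → H₀ u` in `L²(ℝ²)`. -/
theorem coupling_times_disc_integral_tendsto_zero
    (u : SchwartzMap (EuclideanSpace ℝ (Fin 2)) ℂ)
    (hsupp : HasCompactSupport (𝓕 ⇑u))
    (h0 : (0 : EuclideanSpace ℝ (Fin 2)) ∉ tsupport (𝓕 ⇑u))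
    (μ : ℝ) (hμ : 0 < μ) :
    Tendsto (fun Λ : ℝ => gCoupling μ Λ * Λ * ‖∫ q in disc Λ, u q‖) atTop (nhds 0) ∧
    Tendsto (fun Λ : ℝ =>
        eLpNorm (fun p : EuclideanSpace ℝ (Fin 2) =>
          (disc Λ).indicator
            (fun _ => ((gCoupling μ Λ / (2 * Real.pi) ^ 2 : ℝ) : ℂ) * ∫ q in disc Λ, u q) p)
          2 volume)
      atTop (nhds 0) := by
  simpa only [Complex.real_smul] using coupling_times_disc_integral_tendsto_zero_general
    u.integrable (by simpa using u.integrable_pow_mul volume 1)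
    ((fourier_apply_zero_s12 u).symm.trans (image_eq_zero_of_notMem_tsupport h0)) hμ.ne'
end
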